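/- Define g_1 = 3, g_2 = 2, and g_n = 2·g_{n−2} + 1 for n ≥ 3. Let x be the infinite binary word x = 0 0 1 0 0 1^{g_1} 0 1^{g_2} 0 1^{g_3} 0 ⋯ (that is, after the prefix 00100 the word consists of the blocks 1^{g_n} for n = 1, 2, 3, …, each followed by a single 0). Then for all i, j with 2 ≤ i < j, the word x[i..2i] is not a factor of x[j..2j]. -/

import Mathlib

/-- The factor `x[a..b]` of a 1-indexed infinite word `x`. -/
def extractInf {α : Type*} (x : ℕ → α) (a b : ℕ) : List α :=
  (List.range (b + 1 - a)).map (fun k => x (a + k))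

/-!
From position `2` on, the distances between consecutive zeros of `x` are
`2, 1, 4, 3, 8, 6, 16, 12, …`: each entry from the fifth on is twice the one two places before it,
and no entry occurs twice. The distance between two consecutive zeros therefore tells where they
are, so a factor containing two of them occurs only once from position `2` on. The positions
`z n` of these zeros satisfy `z (n + 2) ≤ 2 * z n + 2`, so every interval `[i, 2 * i]` with `2 ≤ i`
contains two consecutive ones.
-/

theorem exists_shift_of_extractInf_infix {α : Type*} {x : ℕ → α} {a b c e : ℕ}
    (h : extractInf x a b <:+: extractInf x c e) :
    ∃ t, c ≤ t ∧ ∀ k, a + k ≤ b → x (t + k) = x (a + k) := by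
  obtain ⟨o, hlen, hget⟩ := List.infix_iff_getElem?.mp h
  simp only [extractInf, List.length_map, List.length_range] at hlen hget
  refine ⟨c + o, Nat.le_add_right c o, fun k hk => ?_⟩
  have hk' := hget k (by omega)
  rw [List.getElem?_eq_getElem (by simp only [List.length_map, List.length_range]; omega)] at hk'
  simp only [List.getElem_map, List.getElem_range, Option.some.injEq] at hk'
  rw [← hk', Nat.add_assoc, Nat.add_comm o k]

theorem eq_add_one_of_forall_notMem_range {β : Type*} [Preorder β] {z : ℕ → β}
    (hz : StrictMono z) {m n : ℕ} (hmn : z m < z n)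
    (h : ∀ p ∈ Set.Ioo (z m) (z n), p ∉ Set.range z) : n = m + 1 := by
  have hlt : m < n := hz.lt_iff_lt.mp hmn
  by_contra hne
  exact h (z (m + 1)) ⟨hz m.lt_add_one, hz (by omega)⟩ ⟨m + 1, rfl⟩

section GapSequence

variable {z : ℕ → ℕ} {i : ℕ}

theorem eq_of_forall_add_mem_range_iff (hz : StrictMono z)
    (hgap : Function.Injective fun n => z (n + 1) - z n) {l n t : ℕ}
    (hin : i ≤ z n) (hnl : z (n + 1) ≤ l)
    (h : ∀ k, i + k ≤ l → (t + k ∈ Set.range z ↔ i + k ∈ Set.range z)) : t = i := by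
  have hlt : z n < z (n + 1) := hz n.lt_add_one
  obtain ⟨u, hu⟩ := Nat.exists_eq_add_of_le hin
  obtain ⟨v, hv⟩ := Nat.exists_eq_add_of_le (hin.trans hlt.le)
  obtain ⟨p, hp⟩ := (h u (by omega)).mpr ⟨n, hu⟩
  obtain ⟨q, hq⟩ := (h v (by omega)).mpr ⟨n + 1, hv⟩
  have hqp : q = p + 1 := by
    refine eq_add_one_of_forall_notMem_range hz (by omega) fun w ⟨hpw, hwq⟩ hw => ?_
    obtain ⟨k, rfl⟩ : ∃ k, w = t + k := Nat.exists_eq_add_of_le (by omega)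
    obtain ⟨m, hm⟩ := (h k (by omega)).mp hw
    exact hz.monotone.ne_of_lt_of_lt_nat n (by omega) (by omega) m hm
  subst hqp
  have hpn : p = n := hgap (show z (p + 1) - z p = z (n + 1) - z n by omega)
  subst hpn
  omega

theorem exists_le_and_succ_le_two_mul (hz : StrictMono z)
    (hgrowth : ∀ n, z (n + 2) ≤ 2 * z n + 2) (hi : z 1 ≤ 2 * i) :
    ∃ n, i ≤ z n ∧ z (n + 1) ≤ 2 * i := by
  classical
  have hex : ∃ n, i ≤ z n := ⟨i, hz.le_apply⟩
  refine ⟨Nat.find hex, Nat.find_spec hex, ?_⟩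
  cases hN : Nat.find hex with
  | zero => exact hi
  | succ m =>
    have hm : z m < i := not_le.mp (Nat.find_min hex (by omega))
    calc z (m + 2) ≤ 2 * z m + 2 := hgrowth m
      _ ≤ 2 * i := by omega

end GapSequence

/-- The distance from the `n`-th zero of the word to the next one, where the zeros are counted
from `0` starting at position `2`. -/
def zeroGap : ℕ → ℕ
  | 0 => 2
  | 1 => 1
  | 2 => 4
  | 3 => 3
  | n + 4 => 2 * zeroGap (n + 2)

theorem three_le_zeroGap_add_two (n : ℕ) : 3 ≤ zeroGap (n + 2) := by
  induction n using Nat.twoStepInduction with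
  | zero | one => simp [zeroGap]
  | more n ih _ => rw [zeroGap]; omega

theorem zeroGap_pos : ∀ n, 0 < zeroGap n
  | 0 | 1 => by simp [zeroGap]
  | n + 2 => (three_le_zeroGap_add_two n).trans_lt' (by decide)

theorem zeroGap_lt_zeroGap_add_four {m : ℕ} (hm : m < 4) (n : ℕ) :
    zeroGap m < zeroGap (n + 4) := by
  have hm4 : zeroGap m ≤ 4 := by interval_cases m <;> simp [zeroGap]
  have hn := three_le_zeroGap_add_two n
  rw [zeroGap]
  omega

theorem zeroGap_injOn_Iio_four : Set.InjOn zeroGap (Set.Iio 4) := by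
  intro m (hm : m < 4) n (hn : n < 4) h
  interval_cases m <;> interval_cases n <;> simp_all [zeroGap]

theorem zeroGap_injective : Function.Injective zeroGap := by
  intro m
  induction m using Nat.strong_induction_on with
  | _ m ih =>
    intro n h
    rcases lt_or_ge m 4 with hm | hm <;> rcases lt_or_ge n 4 with hn | hn
    · exact zeroGap_injOn_Iio_four hm hn h
    · obtain ⟨n, rfl⟩ := Nat.exists_eq_add_of_le' hn
      exact absurd h (zeroGap_lt_zeroGap_add_four hm n).ne
    · obtain ⟨m, rfl⟩ := Nat.exists_eq_add_of_le' hm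
      exact absurd h (zeroGap_lt_zeroGap_add_four hn m).ne'
    · obtain ⟨m, rfl⟩ := Nat.exists_eq_add_of_le' hm
      obtain ⟨n, rfl⟩ := Nat.exists_eq_add_of_le' hn
      have hhalf : zeroGap (m + 2) = zeroGap (n + 2) := by simpa [zeroGap] using h
      have := ih (m + 2) (by omega) hhalf
      omega

/-- The position of the `n`-th zero of the word, counted as for `zeroGap`: `2, 4, 5, 9, 12, 20, …`.
The zero at position `1` is left out because its distance `1` to the next zero occurs again. -/
def zeroPos (n : ℕ) : ℕ := 2 + ∑ m ∈ Finset.range n, zeroGap m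

theorem zeroPos_succ (n : ℕ) : zeroPos (n + 1) = zeroPos n + zeroGap n := by
  rw [zeroPos, Finset.sum_range_succ, ← Nat.add_assoc, ← zeroPos]

theorem zeroPos_strictMono : StrictMono zeroPos :=
  strictMono_nat_of_lt_succ fun n => by
    rw [zeroPos_succ]
    exact Nat.lt_add_of_pos_right (zeroGap_pos n)

theorem zeroPos_gap_injective : Function.Injective fun n => zeroPos (n + 1) - zeroPos n := by
  simpa only [zeroPos_succ, Nat.add_sub_cancel_left] using zeroGap_injective

theorem zeroPos_add_four (n : ℕ) : zeroPos (n + 4) = 2 * zeroPos (n + 2) + 2 := by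
  induction n with
  | zero => decide
  | succ n ih =>
    calc zeroPos (n + 5) = zeroPos (n + 4) + zeroGap (n + 4) := zeroPos_succ _
      _ = 2 * zeroPos (n + 2) + 2 + 2 * zeroGap (n + 2) := by rw [ih, zeroGap]
      _ = 2 * zeroPos (n + 3) + 2 := by rw [zeroPos_succ (n + 2)]; ring

theorem zeroPos_add_two_le : ∀ n, zeroPos (n + 2) ≤ 2 * zeroPos n + 2
  | 0 | 1 => by decide
  | n + 2 => (zeroPos_add_four n).le

theorem zeroGap_add_two_eq {g : ℕ → ℕ} (hg1 : g 1 = 3) (hg2 : g 2 = 2)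
    (hgrec : ∀ n : ℕ, 1 ≤ n → g (n + 2) = 2 * g n + 1) (k : ℕ) :
    zeroGap (k + 2) = g (k + 1) + 1 := by
  induction k using Nat.twoStepInduction with
  | zero => rw [hg1, zeroGap]
  | one => rw [hg2, zeroGap]
  | more k ih _ =>
    rw [zeroGap, ih, hgrec (k + 1) k.succ_pos]
    ring

theorem zeroPos_add_two_eq {g : ℕ → ℕ} (hgap : ∀ k, zeroGap (k + 2) = g (k + 1) + 1) (k : ℕ) :
    zeroPos (k + 2) = 5 + ∑ m ∈ Finset.Icc 1 k, (g m + 1) := by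
  induction k with
  | zero => rfl
  | succ k ih =>
    rw [zeroPos_succ, ih, hgap, Nat.add_assoc, ← Finset.sum_Icc_succ_top k.succ_pos]

theorem mem_range_zeroPos_iff {g : ℕ → ℕ} (hgap : ∀ k, zeroGap (k + 2) = g (k + 1) + 1) (p : ℕ) :
    p ∈ Set.range zeroPos ↔ p = 2 ∨ p = 4 ∨ p = 5 ∨
      ∃ k : ℕ, 1 ≤ k ∧ p = 5 + ∑ m ∈ Finset.Icc 1 k, (g m + 1) := by
  have hpos := zeroPos_add_two_eq hgap
  constructor
  · rintro ⟨_ | _ | _ | n, rfl⟩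
    · exact .inl rfl
    · exact .inr (.inl rfl)
    · exact .inr (.inr (.inl rfl))
    · exact .inr (.inr (.inr ⟨n + 1, n.succ_pos, hpos (n + 1)⟩))
  · rintro (rfl | rfl | rfl | ⟨k, -, rfl⟩)
    exacts [⟨0, rfl⟩, ⟨1, rfl⟩, ⟨2, rfl⟩, ⟨k + 2, hpos k⟩]

theorem stmt_13_general {α : Type*} (a : α) (g : ℕ → ℕ) (x : ℕ → α)
    (hg1 : g 1 = 3) (hg2 : g 2 = 2)
    (hgrec : ∀ n : ℕ, 1 ≤ n → g (n + 2) = 2 * g n + 1)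
    (hx : ∀ p : ℕ, 1 ≤ p →
      (x p = a ↔ (p = 1 ∨ p = 2 ∨ p = 4 ∨ p = 5 ∨
        ∃ k : ℕ, 1 ≤ k ∧ p = 5 + ∑ m ∈ Finset.Icc 1 k, (g m + 1))))
    (i j e : ℕ) (hi : 2 ≤ i) (hij : i < j) :
    ¬ (extractInf x i (2 * i) <:+: extractInf x j e) := by
  intro hinf
  have hzero (p : ℕ) (hp : 2 ≤ p) : x p = a ↔ p ∈ Set.range zeroPos := by
    rw [hx p (by omega), mem_range_zeroPos_iff (zeroGap_add_two_eq hg1 hg2 hgrec),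
      or_iff_right (by omega)]
  obtain ⟨t, hjt, hshift⟩ := exists_shift_of_extractInf_infix hinf
  obtain ⟨n, hin, hni⟩ := exists_le_and_succ_le_two_mul zeroPos_strictMono zeroPos_add_two_le
    (show zeroPos 1 ≤ 2 * i from Nat.mul_le_mul_left 2 hi)
  have hti : t = i :=
    eq_of_forall_add_mem_range_iff zeroPos_strictMono zeroPos_gap_injective hin hni fun k hk => by
      rw [← hzero (t + k) (by omega), ← hzero (i + k) (by omega), hshift k hk]
  omega

theorem stmt_13 (g : ℕ → ℕ) (x : ℕ → Fin 2)
    (hg1 : g 1 = 3) (hg2 : g 2 = 2)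
    (hgrec : ∀ n : ℕ, 1 ≤ n → g (n + 2) = 2 * g n + 1)
    -- `x = 00100 1^{g 1} 0 1^{g 2} 0 1^{g 3} 0 ⋯` (1-indexed): the letter at
    -- position `p ≥ 1` is `0` exactly when `p ∈ {1,2,4,5}` or `p` is the position
    -- `5 + ∑_{m=1}^{k} (g m + 1)` of the `0` following the block `1^{g k}`.
    (hx : ∀ p : ℕ, 1 ≤ p →
      (x p = 0 ↔ (p = 1 ∨ p = 2 ∨ p = 4 ∨ p = 5 ∨
        ∃ k : ℕ, 1 ≤ k ∧ p = 5 + ∑ m ∈ Finset.Icc 1 k, (g m + 1)))) :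
    ∀ i j : ℕ, 2 ≤ i → i < j →
      ¬ (extractInf x i (2 * i) <:+: extractInf x j (2 * j)) :=
  fun i j => stmt_13_general 0 g x hg1 hg2 hgrec hx i j (2 * j)
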